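/- Every restricted Lorentz transformation μ is the product of two orthogonal reflections by two-dimensional spacelike planes: there exist spacelike planes A, B with μ = j_A j_B. -/

import Mathlib

noncomputable section

/-- Minkowski spacetime ℝ^{1+3}. -/
abbrev V4 : Type := Fin 4 → ℝ

/-- The Minkowski metric of signature (+,-,-,-). -/
def mg (x y : V4) : ℝ := x 0 * y 0 - x 1 * y 1 - x 2 * y 2 - x 3 * y 3

/-- The distinguished future-directed timelike unit vector. -/
def e0 : V4 := fun i => if i = 0 then 1 else 0

/-- A restricted Lorentz transformation: preserves the metric, has determinant 1,
and preserves the time orientation. -/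
def IsRestrictedLorentz (T : V4 →ₗ[ℝ] V4) : Prop :=
  (∀ x y, mg (T x) (T y) = mg x y) ∧ LinearMap.det T = 1 ∧ 0 < (T e0) 0

/-- A two-dimensional spacelike linear subspace. -/
def IsSpacelikePlane (S : Submodule ℝ V4) : Prop :=
  Module.finrank ℝ S = 2 ∧ ∀ x ∈ S, x ≠ 0 → mg x x < 0

/-- `j` is the orthogonal reflection by the spacelike plane `S`. -/
def IsReflectionBy (S : Submodule ℝ V4) (j : V4 →ₗ[ℝ] V4) : Prop :=
  (∀ x ∈ S, j x = x) ∧ ∀ x, (∀ s ∈ S, mg x s = 0) → j x = -x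


/-- The Minkowski metric as a bilinear form. -/
def mgB : V4 →ₗ[ℝ] V4 →ₗ[ℝ] ℝ :=
  LinearMap.mk₂ ℝ mg
    (by intros; simp [mg]; ring) (by intros; simp [mg]; ring)
    (by intros; simp [mg]; ring) (by intros; simp [mg]; ring)

lemma mgB_apply (x y : V4) : mgB x y = mg x y := rfl

lemma mg_comm' (x y : V4) : mg x y = mg y x := by simp [mg]; ring

lemma mg_add_left (x y z : V4) : mg (x + y) z = mg x z + mg y z := by simp [mg]; ring

lemma mg_smul_left (c : ℝ) (x z : V4) : mg (c • x) z = c * mg x z := by simp [mg]; ring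

lemma mg_neg_left (x z : V4) : mg (-x) z = - mg x z := by simp [mg]; ring

lemma mg_add_right (x y z : V4) : mg z (x + y) = mg z x + mg z y := by simp [mg]; ring

lemma mg_smul_right (c : ℝ) (x z : V4) : mg z (c • x) = c * mg z x := by simp [mg]; ring

lemma mg_neg_right (x z : V4) : mg z (-x) = - mg z x := by simp [mg]; ring

/-- Reflection in the hyperplane orthogonal to `u`. -/
def sig (u : V4) : V4 →ₗ[ℝ] V4 := LinearMap.transvection ((-2 / mg u u) • mgB u) u

lemma sig_apply (u x : V4) : sig u x = x + (-2 / mg u u * mg u x) • u := by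
  simp [sig, LinearMap.transvection.apply, mgB_apply]

lemma sig_det (u : V4) (hu : mg u u ≠ 0) : LinearMap.det (sig u) = -1 := by
  rw [sig, LinearMap.transvection.det]
  simp [mgB_apply]
  field_simp
  norm_num

lemma sig_isom (u : V4) (hu : mg u u ≠ 0) (x y : V4) : mg (sig u x) (sig u y) = mg x y := by
  simp only [sig_apply, mg_add_left, mg_add_right, mg_smul_left, mg_smul_right, mg_comm' x u]
  field_simp
  ring

lemma sig_sig (u : V4) (hu : mg u u ≠ 0) (x : V4) : sig u (sig u x) = x := by
  simp only [sig_apply, mg_add_right, mg_smul_right, add_assoc, ← add_smul]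
  have : -2 / mg u u * mg u x + -2 / mg u u * (mg u x + -2 / mg u u * mg u x * mg u u) = 0 := by
    field_simp
    ring
  rw [this]; simp

lemma sig_self (u : V4) (hu : mg u u ≠ 0) : sig u u = -u := by
  rw [sig_apply, div_mul_cancel₀ _ hu]
  module

lemma sig_ortho (u x : V4) (h : mg u x = 0) : sig u x = x := by
  rw [sig_apply, h]; simp

lemma spacelike_of_ortho (p x : V4) (hp : 0 < mg p p) (h : mg p x = 0) (hx : x ≠ 0) :
    mg x x < 0 := by
  by_contra hc
  simp only [mg] at *
  set S := p 1 ^ 2 + p 2 ^ 2 + p 3 ^ 2 with hS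
  set R := x 1 ^ 2 + x 2 ^ 2 + x 3 ^ 2 with hR
  have hS0 : 0 ≤ S := by positivity
  have hR0 : 0 ≤ R := by positivity
  have h1 : S < p 0 ^ 2 := by rw [hS]; nlinarith
  have h2 : R ≤ x 0 ^ 2 := by rw [hR]; nlinarith
  have h3 : p 0 ^ 2 * x 0 ^ 2 ≤ S * R := by
    have : p 0 * x 0 = p 1 * x 1 + p 2 * x 2 + p 3 * x 3 := by linarith
    rw [← mul_pow, this, hS, hR]
    nlinarith [sq_nonneg (p 1 * x 2 - p 2 * x 1), sq_nonneg (p 1 * x 3 - p 3 * x 1),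
      sq_nonneg (p 2 * x 3 - p 3 * x 2)]
  have h4 : x 0 ^ 2 = 0 := by
    by_contra h5
    have h6 : 0 < x 0 ^ 2 := lt_of_le_of_ne (sq_nonneg _) (Ne.symm h5)
    nlinarith [mul_le_mul_of_nonneg_left h2 hS0, mul_lt_mul_of_pos_right h1 h6]
  have h7 : R = 0 := by linarith
  apply hx
  ext i
  have a0 : x 0 = 0 := by simpa using h4
  have a1 : x 1 = 0 := by
    have : x 1 ^ 2 = 0 := by nlinarith [sq_nonneg (x 1), sq_nonneg (x 2), sq_nonneg (x 3)]
    simpa using this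
  have a2 : x 2 = 0 := by
    have : x 2 ^ 2 = 0 := by nlinarith [sq_nonneg (x 1), sq_nonneg (x 2), sq_nonneg (x 3)]
    simpa using this
  have a3 : x 3 = 0 := by
    have : x 3 ^ 2 = 0 := by nlinarith [sq_nonneg (x 1), sq_nonneg (x 2), sq_nonneg (x 3)]
    simpa using this
  fin_cases i <;> simpa

/-- An isometry of determinant `-1` has a nonzero fixed vector. -/
lemma exists_fixed (T : V4 →ₗ[ℝ] V4) (hT : ∀ x y, mg (T x) (T y) = mg x y)
    (hd : LinearMap.det T = -1) : ∃ n, n ≠ 0 ∧ T n = n := by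
  let M := LinearMap.toMatrix' T
  let η : Matrix (Fin 4) (Fin 4) ℝ := Matrix.diagonal ![1, -1, -1, -1]
  have hη : η.det = -1 := by simp [η, Matrix.det_diagonal, Fin.prod_univ_four]
  have hM : M.transpose * η * M = η := by
    ext i j
    have h := hT (Pi.single i 1) (Pi.single j 1)
    have h' : (M.transpose * η * M) i j = mg (T (Pi.single i 1)) (T (Pi.single j 1)) := by
      simp [Matrix.mul_apply, Fin.sum_univ_four, η, Matrix.diagonal_apply, mg, M,
        LinearMap.toMatrix'_apply, Matrix.transpose_apply]
      ring
    rw [h', h]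
    fin_cases i <;> fin_cases j <;> simp [mg, η, Pi.single_apply]
  have hMd : M.det = -1 := by rw [LinearMap.det_toMatrix', hd]
  have key : M.transpose * η * (M - 1) = (1 - M).transpose * η := by
    rw [Matrix.mul_sub, hM, Matrix.transpose_sub, Matrix.sub_mul]; simp
  have h0 : (M - 1).det = 0 := by
    have h := congrArg Matrix.det key
    rw [Matrix.det_mul, Matrix.det_mul, Matrix.det_mul, Matrix.det_transpose,
      Matrix.det_transpose, hMd, hη, ← neg_sub M 1, Matrix.det_neg] at h
    simp at h
    linarith
  have h1 : LinearMap.det (T - LinearMap.id) = 0 := by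
    rw [← LinearMap.det_toMatrix', map_sub, LinearMap.toMatrix'_id]
    exact h0
  obtain ⟨n, hn, hn0⟩ := (Submodule.ne_bot_iff _).mp
    (bot_lt_iff_ne_bot.mp (LinearMap.bot_lt_ker_of_det_eq_zero h1))
  refine ⟨n, hn0, ?_⟩
  simpa [sub_eq_zero] using hn

/-- The product of reflections in orthogonal vectors, one of them timelike. -/
lemma plane_reflection (p q : V4) (hp : 0 < mg p p) (hpq : mg p q = 0) (hq : q ≠ 0) :
    ∃ A, IsSpacelikePlane A ∧ IsReflectionBy A (sig p ∘ₗ sig q) := by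
  have hqq := spacelike_of_ortho p q hp hpq hq
  let f : V4 →ₗ[ℝ] ℝ × ℝ := (mgB p).prod (mgB q)
  have hmem : ∀ x, x ∈ LinearMap.ker f ↔ mg p x = 0 ∧ mg q x = 0 := by
    intro x; simp [f, mgB_apply]
  have hsurj : Function.Surjective f := by
    rintro ⟨a, b⟩
    refine ⟨(a / mg p p) • p + (b / mg q q) • q, ?_⟩
    have hqp : mg q p = 0 := by rw [mg_comm', hpq]
    have hp0 := hp.ne'
    have hq0 := hqq.ne
    refine Prod.ext ?_ ?_
    · change mg p _ = a
      simp only [mg_add_right, mg_smul_right, hpq]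
      field_simp
      ring
    · change mg q _ = b
      simp only [mg_add_right, mg_smul_right, hqp]
      field_simp
      ring
  refine ⟨LinearMap.ker f, ⟨?_, ?_⟩, ?_, ?_⟩
  · have h := f.finrank_range_add_finrank_ker
    rw [LinearMap.range_eq_top.mpr hsurj, finrank_top] at h
    simp at h
    omega
  · intro x hx hx0
    exact spacelike_of_ortho p x hp ((hmem x).1 hx).1 hx0
  · intro x hx
    obtain ⟨h1, h2⟩ := (hmem x).1 hx
    rw [LinearMap.comp_apply, sig_ortho q x h2, sig_ortho p x h1]
  · intro x hx
    have hqp : mg q p = 0 := by rw [mg_comm', hpq]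
    obtain ⟨a, ha⟩ : ∃ a, a = - (mg p x / mg p p) := ⟨_, rfl⟩
    obtain ⟨b, hb⟩ : ∃ b, b = - (mg q x / mg q q) := ⟨_, rfl⟩
    obtain ⟨y, hy⟩ : ∃ y, y = x + (a • p + b • q) := ⟨_, rfl⟩
    have hpy : mg p y = 0 := by
      rw [hy]; simp only [mg_add_right, mg_smul_right, hpq, ha]; field_simp; ring
    have hqy : mg q y = 0 := by
      rw [hy]; simp only [mg_add_right, mg_smul_right, hqp, hb]; field_simp [hqq.ne]; ring
    have hxy := hx y ((hmem y).2 ⟨hpy, hqy⟩)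
    have hyy : mg y y = 0 := by
      have : mg y y = mg x y + (a * mg p y + b * mg q y) := by
        have h := mg_add_left x (a • p + b • q) y
        rw [← hy, mg_add_left, mg_smul_left, mg_smul_left] at h
        exact h
      rw [this, hxy, hpy, hqy]; ring
    have hy0 : y = 0 := by
      by_contra h
      exact (spacelike_of_ortho p y hp hpy h).ne hyy
    have hx' : x = -(a • p + b • q) := by
      rw [hy0] at hy; exact eq_neg_of_add_eq_zero_left hy.symm
    rw [hx', LinearMap.comp_apply]
    simp only [map_neg, map_add, map_smul, sig_ortho q p hqp, sig_self q hqq.ne,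
      sig_self p hp.ne', sig_ortho p q hpq, smul_neg]
    module

lemma exists_ortho3 (x y z : V4) : ∃ b, b ≠ 0 ∧ mg x b = 0 ∧ mg y b = 0 ∧ mg z b = 0 := by
  let f : V4 →ₗ[ℝ] ℝ × ℝ × ℝ := (mgB x).prod ((mgB y).prod (mgB z))
  have : LinearMap.ker f ≠ ⊥ := LinearMap.ker_ne_bot_of_finrank_lt (by simp)
  obtain ⟨b, hb, hb0⟩ := (Submodule.ne_bot_iff _).mp this
  refine ⟨b, hb0, ?_⟩
  simpa [f, mgB_apply] using hb

lemma ortho_of_signs (T : V4 →ₗ[ℝ] V4) (hT : ∀ x y, mg (T x) (T y) = mg x y) (x y : V4)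
    (hx : T x = -x) (hy : T y = y) : mg x y = 0 := by
  have h := hT x y
  rw [hx, hy, mg_neg_left] at h
  linarith

lemma ext_ortho (S T : V4 →ₗ[ℝ] V4) (v : Fin 4 → V4)
    (h1 : ∀ i j, i ≠ j → mg (v i) (v j) = 0) (h2 : ∀ i, mg (v i) (v i) ≠ 0)
    (h : ∀ i, S (v i) = T (v i)) : S = T := by
  have hl : LinearIndependent ℝ v :=
    LinearMap.linearIndependent_of_isOrthoᵢ (B := mgB)
      (LinearMap.isOrthoᵢ_def.2 fun i j hij => h1 i j hij) h2
  refine (basisOfLinearIndependentOfCardEqFinrank hl (by simp)).ext fun i => ?_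
  simpa using h i

theorem restricted_lorentz_is_product_of_two_reflections
    (μ : V4 →ₗ[ℝ] V4) (hμ : IsRestrictedLorentz μ) :
    ∃ (A B : Submodule ℝ V4) (jA jB : V4 →ₗ[ℝ] V4),
      IsSpacelikePlane A ∧ IsSpacelikePlane B ∧
      IsReflectionBy A jA ∧ IsReflectionBy B jB ∧ μ = jA ∘ₗ jB := by
  obtain ⟨hiso, hdet, hpos⟩ := hμ
  have he : mg e0 e0 = 1 := by simp [mg, e0]
  have he' : mg e0 (μ e0) = μ e0 0 := by simp [mg, e0]
  have hw : mg (μ e0) (μ e0) = 1 := by rw [hiso, he]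
  have he0 : 0 < mg e0 e0 := by rw [he]; norm_num
  obtain ⟨u, hu⟩ : ∃ u, u = e0 + μ e0 := ⟨_, rfl⟩
  have huu : mg u u = 2 + 2 * μ e0 0 := by
    rw [hu]; simp only [mg_add_left, mg_add_right, he, hw, mg_comm' (μ e0) e0, he']; ring
  have hup : 0 < mg u u := by rw [huu]; linarith
  have huw : mg u (μ e0) = 1 + μ e0 0 := by
    rw [hu, mg_add_left, hw, he']; ring
  -- first step: an isometry of determinant -1 reversing e0
  have T_iso : ∀ x y, mg ((sig u ∘ₗ μ) x) ((sig u ∘ₗ μ) y) = mg x y := fun x y => by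
    simp only [LinearMap.comp_apply]; rw [sig_isom u hup.ne', hiso]
  have T_e0 : (sig u ∘ₗ μ) e0 = -e0 := by
    rw [LinearMap.comp_apply, sig_apply, huw, huu]
    have : -2 / (2 + 2 * μ e0 0) * (1 + μ e0 0) = -1 := by field_simp
    rw [this, hu]; module
  obtain ⟨n, hn0, hn⟩ := exists_fixed _ T_iso
    (by rw [LinearMap.det_comp, sig_det u hup.ne', hdet]; norm_num)
  have hen := ortho_of_signs _ T_iso _ _ T_e0 hn
  have hnn := spacelike_of_ortho e0 n he0 hen hn0
  obtain ⟨b, hb0, hbe, hbn, hbu⟩ := exists_ortho3 e0 n u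
  have hbb := spacelike_of_ortho e0 b he0 hbe hb0
  -- second step: τ
  obtain ⟨τ, hτ⟩ : ∃ τ, τ = sig b ∘ₗ (sig u ∘ₗ μ) := ⟨_, rfl⟩
  have τ_iso : ∀ x y, mg (τ x) (τ y) = mg x y := fun x y => by
    rw [hτ, LinearMap.comp_apply, LinearMap.comp_apply (sig b), sig_isom b hbb.ne, T_iso]
  have τ_det : LinearMap.det τ = 1 := by
    rw [hτ, LinearMap.det_comp, LinearMap.det_comp, sig_det u hup.ne', sig_det b hbb.ne, hdet]
    norm_num
  have τ_e0 : τ e0 = -e0 := by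
    rw [hτ, LinearMap.comp_apply, T_e0, map_neg, sig_ortho b e0 (by rw [mg_comm', hbe])]
  have τ_n : τ n = n := by
    rw [hτ, LinearMap.comp_apply, hn, sig_ortho b n (by rw [mg_comm', hbn])]
  -- third step: a second fixed vector
  have ρ_iso : ∀ x y, mg ((sig n ∘ₗ τ) x) ((sig n ∘ₗ τ) y) = mg x y := fun x y => by
    simp only [LinearMap.comp_apply]; rw [sig_isom n hnn.ne, τ_iso]
  obtain ⟨m, hm0, hm⟩ := exists_fixed _ ρ_iso
    (by rw [LinearMap.det_comp, sig_det n hnn.ne, τ_det]; norm_num)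
  have hne : mg n e0 = 0 := by rw [mg_comm', hen]
  have hem := ortho_of_signs _ ρ_iso e0 m
    (by rw [LinearMap.comp_apply, τ_e0, map_neg, sig_ortho n e0 hne]) hm
  have hnm := ortho_of_signs _ ρ_iso n m
    (by rw [LinearMap.comp_apply, τ_n, sig_self n hnn.ne]) hm
  have hmm := spacelike_of_ortho e0 m he0 hem hm0
  have τ_m : τ m = m := by
    have h := congrArg (sig n) hm
    rw [LinearMap.comp_apply, sig_sig n hnn.ne, sig_ortho n m hnm] at h
    exact h
  -- fourth step: the remaining reversed vector
  have κ_iso : ∀ x y, mg ((-(sig e0 ∘ₗ τ)) x) ((-(sig e0 ∘ₗ τ)) y) = mg x y := fun x y => by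
    simp only [LinearMap.neg_apply, LinearMap.comp_apply, mg_neg_left, mg_neg_right, neg_neg]
    rw [sig_isom e0 he0.ne', τ_iso]
  have κ_det : LinearMap.det (-(sig e0 ∘ₗ τ)) = -1 := by
    rw [← neg_one_smul ℝ, LinearMap.det_smul, LinearMap.det_comp, sig_det e0 he0.ne', τ_det]
    simp
    norm_num
  obtain ⟨k, hk0, hk⟩ := exists_fixed _ κ_iso κ_det
  have hek := ortho_of_signs _ κ_iso e0 k
    (by rw [LinearMap.neg_apply, LinearMap.comp_apply, τ_e0, map_neg, sig_self e0 he0.ne', neg_neg])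
    hk
  have hnk := ortho_of_signs _ κ_iso n k
    (by rw [LinearMap.neg_apply, LinearMap.comp_apply, τ_n, sig_ortho e0 n hen]) hk
  have hmk := ortho_of_signs _ κ_iso m k
    (by rw [LinearMap.neg_apply, LinearMap.comp_apply, τ_m, sig_ortho e0 m hem]) hk
  have hkk := spacelike_of_ortho e0 k he0 hek hk0
  have τ_k : τ k = -k := by
    have h := congrArg (sig e0) hk
    rw [LinearMap.neg_apply, LinearMap.comp_apply, map_neg, sig_sig e0 he0.ne',
      sig_ortho e0 k hek] at h
    rw [← h, neg_neg, h]
  have hke : mg k e0 = 0 := by rw [mg_comm', hek]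
  have hkn : mg k n = 0 := by rw [mg_comm', hnk]
  have hkm : mg k m = 0 := by rw [mg_comm', hmk]
  have hme : mg m e0 = 0 := by rw [mg_comm', hem]
  have hmn : mg m n = 0 := by rw [mg_comm', hnm]
  have τ_eq : τ = sig e0 ∘ₗ sig k := by
    apply ext_ortho _ _ ![e0, n, m, k]
    · intro i j hij
      fin_cases i <;> fin_cases j <;> first | exact absurd rfl hij | assumption
    · intro i
      fin_cases i
      · exact he0.ne'
      · exact hnn.ne
      · exact hmm.ne
      · exact hkk.ne
    · intro i
      fin_cases i
      · change τ e0 = sig e0 (sig k e0)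
        rw [τ_e0, sig_ortho k e0 hke, sig_self e0 he0.ne']
      · change τ n = sig e0 (sig k n)
        rw [τ_n, sig_ortho k n hkn, sig_ortho e0 n hen]
      · change τ m = sig e0 (sig k m)
        rw [τ_m, sig_ortho k m hkm, sig_ortho e0 m hem]
      · change τ k = sig e0 (sig k k)
        rw [τ_k, sig_self k hkk.ne, map_neg, sig_ortho e0 k hek]
  obtain ⟨A, hA, hjA⟩ := plane_reflection u b hup hbu hb0
  obtain ⟨B, hB, hjB⟩ := plane_reflection e0 k he0 hek hk0
  refine ⟨A, B, _, _, hA, hB, hjA, hjB, ?_⟩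
  rw [← τ_eq, hτ]
  refine LinearMap.ext fun x => ?_
  simp only [LinearMap.comp_apply]
  rw [sig_sig b hbb.ne, sig_sig u hup.ne']
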